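/- arXiv:1501.00721 — 2 statements merged into one kernel-verified Lean document; each statement's English description precedes it below -/
import Mathlib

section
/- Let O be a finite family of bounded nonempty objects in ℝ^d with density ρ, let c_d be a constant such that every ball in ℝ^d of radius s can be covered by c_d balls of radius s/2, and let α ∈ (0,1). Then any ball of radius r in ℝ^d intersects at most ρ·c_d^{⌈log₂(1/α)⌉} objects of O having diameter at least 2rα. -/
/-- A finite family `O` of subsets of `ℝ^d` has density at most `ρ` if every bounded
subset `b` of `ℝ^d` intersects at most `ρ` members of `O` whose diameter is at least
the diameter of `b`. -/
def FamilyDensityLE (d : ℕ) (O : Set (Set (EuclideanSpace ℝ (Fin d)))) (ρ : ℝ) : Prop :=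
  ∀ b : Set (EuclideanSpace ℝ (Fin d)), Bornology.IsBounded b →
    ({o ∈ O | (o ∩ b).Nonempty ∧ Metric.diam b ≤ Metric.diam o}.ncard : ℝ) ≤ ρ

/-!
Applying the covering property `⌈log₂ (1 / α)⌉` times, with constant `c`, covers a ball of radius
`r` by `c ^ ⌈log₂ (1 / α)⌉` balls of radius at most `r α`. Each of these has diameter at most
`2 r α`, so by the density hypothesis it meets at most `ρ` objects of diameter at least `2 r α`; and
an object meeting the big ball meets one of the small ones.
-/

open Bornology Metric Set
open scoped ENNReal NNReal

section PseudoMetricSpace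

variable {X : Type*} [PseudoMetricSpace X]

variable (X) in
/-- `X` is a doubling space with constant `c`: every ball is covered by at most `c` balls of half
its radius, with arbitrary centres. -/
def IsDoublingWith (c : ℕ) : Prop :=
  ∀ (x : X) (s : ℝ), 0 < s →
    ∃ T : Finset X, T.card ≤ c ∧ closedBall x s ⊆ ⋃ y ∈ T, closedBall y (s / 2)

/-- The members of the family `O` that meet `b` and have diameter at least `D`. The diameter is
the extended one, so that unbounded objects count as large. -/
def largeObjectsMeeting (O : Set (Set X)) (D : ℝ≥0∞) (b : Set X) : Set (Set X) :=
  {o ∈ O | (o ∩ b).Nonempty ∧ D ≤ ediam o}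

/-- The family `O` has density at most `ρ`: every bounded set meets at most `ρ` objects at least
as large as itself. Counting with `encard` and measuring with `ediam` makes the notion meaningful
for infinite families and unbounded objects. -/
def HasDensityLE (O : Set (Set X)) (ρ : ℝ≥0∞) : Prop :=
  ∀ b : Set X, IsBounded b → (largeObjectsMeeting O (ediam b) b).encard ≤ ρ

theorem IsDoublingWith.exists_cover_closedBall_div_two_pow {c : ℕ} (hc : IsDoublingWith X c)
    (x : X) {r : ℝ} (hr : 0 < r) (n : ℕ) :
    ∃ T : Finset X, T.card ≤ c ^ n ∧ closedBall x r ⊆ ⋃ y ∈ T, closedBall y (r / 2 ^ n) := by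
  classical
  induction n with
  | zero => exact ⟨{x}, by simp⟩
  | succ n ih =>
    obtain ⟨T, hT_card, hT_cover⟩ := ih
    choose S hS_card hS_cover using fun y ↦ hc y (r / 2 ^ n) (by positivity)
    refine ⟨T.biUnion S, ?_, ?_⟩
    · calc (T.biUnion S).card
        _ ≤ T.card * c := Finset.card_biUnion_le_card_mul _ _ _ fun y _ ↦ hS_card y
        _ ≤ c ^ n * c := by gcongr
        _ = c ^ (n + 1) := (pow_succ c n).symm
    · have radius_eq : r / 2 ^ (n + 1) = r / 2 ^ n / 2 := by rw [pow_succ, div_div]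
      rw [radius_eq, Finset.set_biUnion_biUnion]
      exact hT_cover.trans (iUnion₂_mono fun y _ ↦ hS_cover y)

theorem largeObjectsMeeting_subset_biUnion {ι : Type*} (O : Set (Set X)) (D : ℝ≥0∞) {b : Set X}
    {T : Set ι} {B : ι → Set X} (hb : b ⊆ ⋃ i ∈ T, B i) :
    largeObjectsMeeting O D b ⊆ ⋃ i ∈ T, largeObjectsMeeting O D (B i) := by
  rintro o ⟨ho, ⟨x, hxo, hxb⟩, hD⟩
  obtain ⟨i, hi, hxi⟩ := mem_iUnion₂.1 (hb hxb)
  exact mem_biUnion hi ⟨ho, ⟨x, hxo, hxi⟩, hD⟩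

theorem encard_largeObjectsMeeting_le_card_mul {ι : Type*} {O : Set (Set X)} {D k : ℝ≥0∞}
    {b : Set X} {T : Finset ι} {B : ι → Set X} (hb : b ⊆ ⋃ i ∈ T, B i)
    (hk : ∀ i ∈ T, (largeObjectsMeeting O D (B i)).encard ≤ k) :
    (largeObjectsMeeting O D b).encard ≤ T.card * k := by
  have encard_le_sum : (largeObjectsMeeting O D b).encard ≤
      ∑ i ∈ T, (largeObjectsMeeting O D (B i)).encard :=
    (encard_le_encard (largeObjectsMeeting_subset_biUnion O D hb)).trans
      (T.set_encard_biUnion_le _)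
  calc ((largeObjectsMeeting O D b).encard : ℝ≥0∞)
      ≤ ∑ i ∈ T, ((largeObjectsMeeting O D (B i)).encard : ℝ≥0∞) :=
        (ENat.toENNReal_mono encard_le_sum).trans_eq (map_sum ENat.toENNRealRingHom _ T)
    _ ≤ T.card * k := by simpa only [nsmul_eq_mul] using T.sum_le_card_nsmul _ k hk

theorem ediam_closedBall_le (x : X) (r : ℝ) : ediam (closedBall x r) ≤ ENNReal.ofReal (2 * r) :=
  ediam_le_of_forall_dist_le fun _ hy _ hz ↦
    (dist_triangle_right _ _ x).trans ((add_le_add hy hz).trans_eq (two_mul r).symm)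

theorem HasDensityLE.encard_largeObjectsMeeting_le {O : Set (Set X)} {ρ D : ℝ≥0∞}
    (hO : HasDensityLE O ρ) {b : Set X} (hb : IsBounded b) (hD : ediam b ≤ D) :
    (largeObjectsMeeting O D b).encard ≤ ρ := by
  have subset : largeObjectsMeeting O D b ⊆ largeObjectsMeeting O (ediam b) b :=
    fun _ ⟨ho, hob, hDo⟩ ↦ ⟨ho, hob, hD.trans hDo⟩
  exact (ENat.toENNReal_mono (encard_le_encard subset)).trans (hO b hb)

theorem HasDensityLE.encard_largeObjectsMeeting_closedBall_le {O : Set (Set X)} {ρ D : ℝ≥0∞}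
    (hO : HasDensityLE O ρ) {c : ℕ} (hc : IsDoublingWith X c) (p : X) {r : ℝ} (hr : 0 < r) {n : ℕ}
    (hD : ENNReal.ofReal (2 * (r / 2 ^ n)) ≤ D) :
    (largeObjectsMeeting O D (closedBall p r)).encard ≤ ρ * c ^ n := by
  obtain ⟨T, hT_card, hT_cover⟩ := hc.exists_cover_closedBall_div_two_pow p hr n
  have small_ball_le (y : X) : (largeObjectsMeeting O D (closedBall y (r / 2 ^ n))).encard ≤ ρ :=
    hO.encard_largeObjectsMeeting_le isBounded_closedBall ((ediam_closedBall_le y _).trans hD)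
  calc ((largeObjectsMeeting O D (closedBall p r)).encard : ℝ≥0∞)
      ≤ T.card * ρ := encard_largeObjectsMeeting_le_card_mul hT_cover fun y _ ↦ small_ball_le y
    _ ≤ c ^ n * ρ := by gcongr; exact_mod_cast hT_card
    _ = ρ * c ^ n := mul_comm _ _

theorem coe_encard_largeObjectsMeeting_le_iff {O : Set (Set X)} (hfin : O.Finite)
    (hbdd : ∀ o ∈ O, IsBounded o) {t : ℝ} {b : Set X} {k : ℝ≥0} :
    ((largeObjectsMeeting O (ENNReal.ofReal t) b).encard : ℝ≥0∞) ≤ k ↔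
      ({o ∈ O | (o ∩ b).Nonempty ∧ t ≤ diam o}.ncard : ℝ) ≤ k := by
  have largeObjectsMeeting_eq :
      largeObjectsMeeting O (ENNReal.ofReal t) b = {o ∈ O | (o ∩ b).Nonempty ∧ t ≤ diam o} :=
    sep_ext_iff.2 fun o ho ↦
      and_congr_right' (ENNReal.ofReal_le_iff_le_toReal (hbdd o ho).ediam_ne_top)
  rw [largeObjectsMeeting_eq, ← (hfin.sep _).cast_ncard_eq, ENat.toENNReal_coe,
    ← ENNReal.coe_natCast, ENNReal.coe_le_coe, ← NNReal.coe_le_coe, NNReal.coe_natCast]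

end PseudoMetricSpace

theorem le_pow_natCeil_logb {b x : ℝ} (hb : 1 < b) (hx : 0 < x) :
    x ≤ b ^ ⌈Real.logb b x⌉₊ := by
  rw [← Real.rpow_natCast]
  exact (Real.logb_le_iff_le_rpow hb hx).1 (Nat.le_ceil _)

theorem stmt2_general {X : Type*} [PseudoMetricSpace X] {O : Set (Set X)} {ρ : ℝ≥0∞}
    (hO : HasDensityLE O ρ) {c : ℕ} (hc : IsDoublingWith X c) {α : ℝ} (hα : 0 < α)
    (p : X) {r : ℝ} (hr : 0 < r) :
    (largeObjectsMeeting O (ENNReal.ofReal (2 * r * α)) (closedBall p r)).encard ≤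
      ρ * c ^ ⌈Real.logb 2 (1 / α)⌉₊ := by
  refine hO.encard_largeObjectsMeeting_closedBall_le hc p hr (ENNReal.ofReal_le_ofReal ?_)
  have inv_le : 1 / α ≤ 2 ^ ⌈Real.logb 2 (1 / α)⌉₊ :=
    le_pow_natCeil_logb one_lt_two (one_div_pos.2 hα)
  have radius_le : r / 2 ^ ⌈Real.logb 2 (1 / α)⌉₊ ≤ r * α := by
    rw [div_eq_mul_one_div]
    gcongr
    exact (one_div_le hα (by positivity)).1 inv_le
  linarith

namespace FamilyDensityLE

variable {d : ℕ} {O : Set (Set (EuclideanSpace ℝ (Fin d)))}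

theorem nonneg {ρ : ℝ} (hO : FamilyDensityLE d O ρ) : 0 ≤ ρ :=
  (Nat.cast_nonneg _).trans (hO ∅ isBounded_empty)

theorem hasDensityLE {ρ : ℝ≥0} (hO : FamilyDensityLE d O ρ) (hfin : O.Finite)
    (hbdd : ∀ o ∈ O, IsBounded o) : HasDensityLE O ρ := by
  intro b hb
  rw [← ENNReal.ofReal_toReal hb.ediam_ne_top]
  exact (coe_encard_largeObjectsMeeting_le_iff hfin hbdd).2 (hO b hb)

end FamilyDensityLE

/-- if `O` has density `ρ`, `c_d` is such that every ball of radius `s` can be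
covered by `c_d` balls of radius `s/2`, and `α ∈ (0,1)`, then any ball of radius `r`
intersects at most `ρ·c_d^{⌈log₂(1/α)⌉}` objects of `O` of diameter at least `2rα`. -/
theorem stmt2 (d : ℕ) (O : Set (Set (EuclideanSpace ℝ (Fin d)))) (hfin : O.Finite)
    (hbdd : ∀ o ∈ O, Bornology.IsBounded o) (hne : ∀ o ∈ O, o.Nonempty)
    (ρ : ℝ) (hdens : FamilyDensityLE d O ρ)
    (cd : ℕ)
    (hcd : ∀ (x : EuclideanSpace ℝ (Fin d)) (s : ℝ), 0 < s →
      ∃ T : Finset (EuclideanSpace ℝ (Fin d)), T.card ≤ cd ∧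
        Metric.closedBall x s ⊆ ⋃ y ∈ T, Metric.closedBall y (s / 2))
    (α : ℝ) (hα0 : 0 < α) (hα1 : α < 1)
    (p : EuclideanSpace ℝ (Fin d)) (r : ℝ) (hr : 0 < r) :
    ({o ∈ O | (o ∩ Metric.closedBall p r).Nonempty ∧ 2 * r * α ≤ Metric.diam o}.ncard : ℝ)
      ≤ ρ * (cd : ℝ) ^ ⌈Real.logb 2 (1 / α)⌉₊ := by
  lift ρ to ℝ≥0 using hdens.nonneg
  have h := stmt2_general (hdens.hasDensityLE hfin hbdd) hcd hα0 p hr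
  exact_mod_cast (coe_encard_largeObjectsMeeting_le_iff hfin hbdd).1 (by exact_mod_cast h)
end

section
/- There exist constants C > 0 and c ∈ (0,1), depending only on d, such that the following holds: for every finite family O of n bounded nonempty objects in ℝ^d with density ρ and every weight function w: O → ℝ_{≥0} with total weight W = Σ_{o ∈ O} w(o), there exists a (d−1)-dimensional sphere S in ℝ^d such that at most C·(ρ + ρ^{1/d}·n^{1−1/d}) objects of O intersect S, the total weight of the objects of O lying strictly inside S is at most c·W, and the total weight of the objects of O lying strictly outside S is at most c·W. -/
/-! Choose a point in every object and, among the subfamilies carrying a `20⁻ᵈ / 2` fraction of the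
weight, one whose points have the least diameter `r`. A ball `B(x, r)` contains these points, while
`B(x, 2r)` is covered by `20ᵈ` sets of diameter less than `r` and so carries at most half of the
weight. Hence every sphere about `x` of radius between `r` and `2r` is balanced.

The sphere of radius `R` about `x` meets `o` only if `R` lies in an interval of length `diam o`, so
for an average `R` it meets at most `r⁻¹ ∑ diam o` of the objects near `B(x, 2r)` of diameter less
than `2r`. By density, at most `ρ (10r / t)ᵈ` of these have diameter at least `t`, and such a weak
`Lᵈ` bound forces `∑ diam o = O(r ρ^{1/d} n^{1-1/d})` when `d ≥ 2`. There are only `O(ρ)` objects of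
diameter at least `2r`. For `d = 1` the weak bound is useless, but a sphere has two points.

If `r = 0`, a single point `x` is heavy. A small enough sphere through `x` meets only objects
containing `x` or of diameter at least that of the sphere, and it has none of the objects whose
chosen point is `x` strictly inside or outside. -/

section Sums

open scoped Finset

variable {ι κ : Type*} {s : Finset ι} {w : ι → ℝ}

lemma sum_filter_add_sum_filter_le (hw : ∀ i ∈ s, 0 ≤ w i) {P Q : ι → Prop}
    [DecidablePred P] [DecidablePred Q] (hPQ : ∀ i ∈ s, P i → ¬ Q i) :
    ∑ i ∈ s with P i, w i + ∑ i ∈ s with Q i, w i ≤ ∑ i ∈ s, w i := by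
  rw [← Finset.sum_filter_add_sum_filter_not s P w]
  gcongr with i hi
  · exact fun i hi _ => hw i (Finset.mem_filter.1 hi).1
  · exact fun hQi hPi => hPQ i hi hPi hQi

lemma sum_filter_le_card_mul (hw : ∀ i ∈ s, 0 ≤ w i) {c : Finset κ} {m : ℝ} {P : ι → Prop}
    {Q : κ → ι → Prop} [DecidablePred P] [∀ k, DecidablePred (Q k)]
    (hPQ : ∀ i ∈ s, P i → ∃ k ∈ c, Q k i)
    (hQ : ∀ k ∈ c, ∑ i ∈ s with Q k i, w i ≤ m) :
    ∑ i ∈ s with P i, w i ≤ #c * m := by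
  have hite (k : κ) (i : ι) (hi : i ∈ s) : 0 ≤ if Q k i then w i else 0 :=
    ite_nonneg (hw i hi) le_rfl
  calc
    ∑ i ∈ s with P i, w i ≤ ∑ i ∈ s, ∑ k ∈ c, if Q k i then w i else 0 := by
      rw [Finset.sum_filter]
      refine Finset.sum_le_sum fun i hi => ?_
      split_ifs with hP
      · obtain ⟨k, hk, hki⟩ := hPQ i hi hP
        simpa only [if_pos hki] using Finset.single_le_sum (fun k _ => hite k i hi) hk
      · exact Finset.sum_nonneg fun k _ => hite k i hi
    _ = ∑ k ∈ c, ∑ i ∈ s with Q k i, w i := by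
      simp only [Finset.sum_filter, Finset.sum_comm (s := s)]
    _ ≤ #c * m := by simpa only [nsmul_eq_mul] using Finset.sum_le_card_nsmul c _ m hQ

lemma rpow_le_rpow_add_mul_sub {x y a : ℝ} (hx : 0 ≤ x) (hy : 0 < y) (ha0 : 0 ≤ a) (ha1 : a ≤ 1) :
    x ^ a ≤ y ^ a + a * y ^ (a - 1) * (x - y) := by
  have hxy : 0 ≤ x / y := by positivity
  calc
    x ^ a = y ^ a * (1 + (x / y - 1)) ^ a := by
      rw [add_sub_cancel, Real.div_rpow hx hy.le, mul_div_cancel₀ _ (by positivity)]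
    _ ≤ y ^ a * (1 + a * (x / y - 1)) := by
      gcongr
      exact rpow_one_add_le_one_add_mul_self (by linarith) ha0 ha1
    _ = y ^ a + a * y ^ (a - 1) * (x - y) := by
      rw [Real.rpow_sub_one hy.ne']
      field_simp

-- A least term `f a` has the whole index set as its level set, so `hA` bounds `f a` by the
-- increment of the right-hand side when `a` is added.
lemma sum_le_of_forall_card_mul_rpow_le {p q A : ℝ} (hpq : p.HolderConjugate q) {f : ι → ℝ}
    (hf : ∀ i ∈ s, 0 ≤ f i) (hA : ∀ t, 0 < t → #{i ∈ s | t ≤ f i} * t ^ p ≤ A) :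
    ∑ i ∈ s, f i ≤ q * (A ^ p⁻¹ * (#s : ℝ) ^ q⁻¹) := by
  have hA0 : 0 ≤ A := le_trans (by positivity) (hA 1 one_pos)
  have hp := hpq.pos
  have hq := hpq.symm.pos
  classical
  induction s using Finset.induction_on_min_value f with
  | empty => simp only [Finset.sum_empty]; positivity
  | insert a s has hmin ih =>
    have ih := ih (fun i hi => hf i (Finset.mem_insert_of_mem hi)) fun t ht =>
      le_trans (by gcongr; exact Finset.subset_insert a s) (hA t ht)
    have hfa := hf a (Finset.mem_insert_self a s)
    set n := (#s : ℝ)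
    have hcard : (#(insert a s) : ℝ) = n + 1 := by
      rw [Finset.card_insert_of_notMem has, Nat.cast_add_one]
    have hn0 : 0 ≤ n := Nat.cast_nonneg _
    have hn : 0 < n + 1 := by positivity
    have hmin_le : f a ≤ A ^ p⁻¹ * (n + 1) ^ (q⁻¹ - 1) := by
      rcases hfa.eq_or_lt with hfa0 | hfa0
      · rw [← hfa0]; positivity
      have hlevel : (n + 1) * f a ^ p ≤ A := by
        have := hA (f a) hfa0
        rwa [Finset.filter_true_of_mem (by simpa using hmin), hcard] at this
      rw [hpq.symm.inv_sub_one, Real.rpow_neg hn.le, ← div_eq_mul_inv, ← Real.div_rpow hA0 hn.le,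
        Real.le_rpow_inv_iff_of_pos hfa (by positivity) hp, le_div_iff₀' hn]
      exact hlevel
    have htangent : q * n ^ q⁻¹ + (n + 1) ^ (q⁻¹ - 1) ≤ q * (n + 1) ^ q⁻¹ := by
      have := mul_le_mul_of_nonneg_left (rpow_le_rpow_add_mul_sub hn0 hn
        hpq.symm.inv_nonneg (inv_le_one_of_one_le₀ hpq.symm.lt.le)) hq.le
      field_simp at this ⊢
      linarith
    rw [Finset.sum_insert has, hcard]
    calc
      f a + ∑ i ∈ s, f i
        ≤ A ^ p⁻¹ * (n + 1) ^ (q⁻¹ - 1) + q * (A ^ p⁻¹ * n ^ q⁻¹) := by gcongr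
      _ = A ^ p⁻¹ * (q * n ^ q⁻¹ + (n + 1) ^ (q⁻¹ - 1)) := by ring
      _ ≤ A ^ p⁻¹ * (q * (n + 1) ^ q⁻¹) := by gcongr
      _ = q * (A ^ p⁻¹ * (n + 1) ^ q⁻¹) := by ring

end Sums

section Averaging

open scoped ENNReal Finset

open Bornology MeasureTheory Metric

lemma exists_mem_card_filter_mem_mul_le {α ι : Type*} [MeasurableSpace α] {μ : Measure α}
    {s : Set α} (hs0 : μ s ≠ 0) (hs : μ s ≠ ∞) (S : Finset ι) {A : ι → Set α}
    [∀ x i, Decidable (x ∈ A i)] (hA : ∀ i ∈ S, MeasurableSet (A i)) :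
    ∃ x ∈ s, (#{i ∈ S | x ∈ A i} : ℝ≥0∞) * μ s ≤ ∑ i ∈ S, μ (A i) := by
  have hmeas : ∀ i ∈ S, Measurable ((A i).indicator (1 : α → ℝ≥0∞)) := fun i hi =>
    measurable_one.indicator (hA i hi)
  obtain ⟨x, hx, hle⟩ := exists_le_setLAverage hs0 hs
    (Finset.measurable_sum S hmeas).aemeasurable
  refine ⟨x, hx, ?_⟩
  have hcard : (#{i ∈ S | x ∈ A i} : ℝ≥0∞) = ∑ i ∈ S, (A i).indicator 1 x := by
    simp only [Set.indicator_apply, Pi.one_apply, Finset.sum_boole]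
  calc
    (#{i ∈ S | x ∈ A i} : ℝ≥0∞) * μ s
      ≤ (∫⁻ y in s, ∑ i ∈ S, (A i).indicator 1 y ∂μ) / μ s * μ s := by
        rw [hcard, ← setLAverage_eq]
        gcongr
    _ = ∑ i ∈ S, ∫⁻ y in s, (A i).indicator 1 y ∂μ := by
        rw [ENNReal.div_mul_cancel hs0 hs, lintegral_finsetSum _ hmeas]
    _ ≤ ∑ i ∈ S, μ (A i) := by
        refine Finset.sum_le_sum fun i hi => ?_
        rw [lintegral_indicator_one (hA i hi)]
        exact Measure.restrict_apply_le _ _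

open Classical in
lemma exists_mem_Icc_card_filter_sphere_mul_le {X : Type*} [PseudoMetricSpace X] (x : X) {a b : ℝ}
    (hab : a < b) {O : Finset (Set X)} (hO : ∀ o ∈ O, IsBounded o) :
    ∃ R ∈ Set.Icc a b,
      #{o ∈ O | (o ∩ sphere x R).Nonempty} * (b - a) ≤ ∑ o ∈ O, diam o := by
  let A : Set X → Set ℝ := fun o =>
    Set.Icc (infDist x o) (infDist x o + diam o)
  have hvol (o : Set X) : volume (A o) = ENNReal.ofReal (diam o) := by
    simp only [A, Real.volume_Icc, add_sub_cancel_left]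
  obtain ⟨R, hR, hle⟩ := exists_mem_card_filter_mem_mul_le (μ := volume) (s := Set.Icc a b)
    (by simpa using hab) (by simp) O (A := A) fun _ _ => measurableSet_Icc
  refine ⟨R, hR, ?_⟩
  have hsub : {o ∈ O | (o ∩ sphere x R).Nonempty} ⊆ {o ∈ O | R ∈ A o} := by
    simp only [Finset.subset_iff, Finset.mem_filter]
    rintro o ⟨ho, y, hy, hyR⟩
    rw [← mem_sphere'.1 hyR]
    exact ⟨ho, infDist_le_dist_of_mem hy, dist_le_infDist_add_diam (hO o ho) hy⟩
  calc
    (#{o ∈ O | (o ∩ sphere x R).Nonempty} : ℝ) * (b - a)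
      ≤ #{o ∈ O | R ∈ A o} * (b - a) := by gcongr
    _ ≤ ∑ o ∈ O, diam o := by
      rw [← ENNReal.ofReal_le_ofReal_iff (Finset.sum_nonneg fun _ _ => diam_nonneg),
        ENNReal.ofReal_mul (Nat.cast_nonneg _), ENNReal.ofReal_natCast, ← Real.volume_Icc,
        ENNReal.ofReal_sum_of_nonneg fun _ _ => diam_nonneg]
      simpa only [hvol] using hle

open Classical in
lemma exists_mem_Icc_card_filter_sphere_le_add {X : Type*} [PseudoMetricSpace X] (x : X) {a b : ℝ}
    (hab : a < b) (t : ℝ) {O : Finset (Set X)} (hO : ∀ o ∈ O, IsBounded o) :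
    ∃ R ∈ Set.Icc a b, #{o ∈ O | (o ∩ sphere x R).Nonempty} ≤
      (∑ o ∈ O with (o ∩ closedBall x b).Nonempty ∧ diam o < t, diam o) / (b - a) +
        #{o ∈ O | (o ∩ closedBall x b).Nonempty ∧ t ≤ diam o} := by
  set S := {o ∈ O | (o ∩ closedBall x b).Nonempty ∧ diam o < t}
  set L := {o ∈ O | (o ∩ closedBall x b).Nonempty ∧ t ≤ diam o}
  obtain ⟨R, hR, hcount⟩ := exists_mem_Icc_card_filter_sphere_mul_le x hab (O := S)
    fun o ho => hO o (Finset.filter_subset _ _ ho)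
  have hsub : {o ∈ O | (o ∩ sphere x R).Nonempty} ⊆
      {o ∈ S | (o ∩ sphere x R).Nonempty} ∪ L := by
    simp only [Finset.subset_iff, Finset.mem_union, Finset.mem_filter, S, L]
    rintro o ⟨ho, hoR⟩
    have hob : (o ∩ closedBall x b).Nonempty := hoR.mono <| Set.inter_subset_inter_right o <|
      sphere_subset_closedBall.trans <| closedBall_subset_closedBall hR.2
    rcases lt_or_ge (diam o) t with hlt | hge
    · exact Or.inl ⟨⟨ho, hob, hlt⟩, hoR⟩
    · exact Or.inr ⟨ho, hob, hge⟩
  refine ⟨R, hR, ?_⟩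
  calc
    (#{o ∈ O | (o ∩ sphere x R).Nonempty} : ℝ) ≤ #{o ∈ S | (o ∩ sphere x R).Nonempty} + #L := by
      exact_mod_cast (Finset.card_le_card hsub).trans (Finset.card_union_le _ _)
    _ ≤ (∑ o ∈ S, diam o) / (b - a) + #L := by
      gcongr
      exact (le_div_iff₀ (sub_pos.2 hab)).2 hcount

end Averaging

section Covering

open MeasureTheory Metric Module
open scoped Finset NNReal

lemma packingNumber_ne_top_of_totallyBounded {X : Type*} [PseudoEMetricSpace X] {A : Set X}
    (hA : TotallyBounded A) {ε : ℝ≥0} (hε : ε ≠ 0) : packingNumber ε A ≠ ⊤ := by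
  obtain ⟨N, -, hfin, hN⟩ := exists_finite_isCover_of_totallyBounded (half_pos hε.bot_lt).ne' hA
  refine ne_top_of_le_ne_top hfin.encard_lt_top.ne ?_
  calc
    packingNumber ε A = packingNumber (2 * (ε / 2)) A := by rw [mul_div_cancel₀ ε two_ne_zero]
    _ ≤ externalCoveringNumber (ε / 2) A := packingNumber_two_mul_le_externalCoveringNumber _ _
    _ ≤ N.encard := hN.externalCoveringNumber_le_encard

variable {E : Type*} [NormedAddCommGroup E] [NormedSpace ℝ E]

lemma card_le_of_isSeparated_of_subset_closedBall [FiniteDimensional ℝ E] {x : E} {R : ℝ} {ε : ℝ≥0}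
    (hR : 0 ≤ R) (hε : 0 < ε) {s : Finset E} (hs : IsSeparated ε (s : Set E))
    (hsub : (s : Set E) ⊆ closedBall x R) : (#s : ℝ) ≤ (1 + 2 * R / ε) ^ finrank ℝ E := by
  borelize E
  let μ : Measure E := Measure.addHaar
  have hε2 : (0 : ℝ) < ε / 2 := by positivity
  have hdisj : (s : Set E).PairwiseDisjoint fun y => ball y (ε / 2 : ℝ) := by
    intro y hy z hz hyz
    refine ball_disjoint_ball ?_
    have : (ε : ENNReal) < edist y z := hs hy hz hyz
    rw [edist_nndist, ENNReal.coe_lt_coe] at this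
    rw [add_halves, ← coe_nndist]
    exact_mod_cast this.le
  have hball : ⋃ y ∈ s, ball y (ε / 2 : ℝ) ⊆ ball x (R + ε / 2) :=
    Set.iUnion₂_subset fun y hy => ball_subset_ball' <| by
      linarith [mem_closedBall.1 (hsub hy)]
  have hvol : #s * ENNReal.ofReal ((ε / 2 : ℝ) ^ finrank ℝ E) ≤
      ENNReal.ofReal ((R + ε / 2) ^ finrank ℝ E) := by
    refine (ENNReal.mul_le_mul_iff_left (measure_ball_pos μ (0 : E) one_pos).ne'
      measure_ball_lt_top.ne).1 ?_
    calc
      #s * ENNReal.ofReal ((ε / 2 : ℝ) ^ finrank ℝ E) * μ (ball 0 1)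
        = μ (⋃ y ∈ s, ball y (ε / 2 : ℝ)) := by
          rw [measure_biUnion_finset hdisj fun _ _ => measurableSet_ball]
          simp only [μ.addHaar_ball_of_pos _ hε2, Finset.sum_const, nsmul_eq_mul, mul_assoc]
      _ ≤ μ (ball x (R + ε / 2)) := measure_mono hball
      _ = ENNReal.ofReal ((R + ε / 2) ^ finrank ℝ E) * μ (ball 0 1) :=
        μ.addHaar_ball_of_pos _ (by positivity)
  have hreal : #s * (ε / 2 : ℝ) ^ finrank ℝ E ≤ (R + ε / 2) ^ finrank ℝ E := by
    simpa [ENNReal.toReal_ofReal (pow_nonneg hε2.le _)] using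
      ENNReal.toReal_le_of_le_ofReal (by positivity) hvol
  calc
    (#s : ℝ) ≤ (R + ε / 2) ^ finrank ℝ E / (ε / 2 : ℝ) ^ finrank ℝ E :=
      (le_div_iff₀ (by positivity)).2 hreal
    _ = (1 + 2 * R / ε) ^ finrank ℝ E := by
      rw [← div_pow]
      congr 1
      field_simp
      ring

lemma exists_finset_card_le_closedBall_subset [FiniteDimensional ℝ E] (x : E) {R t : ℝ}
    (ht : 0 < t) (htR : t ≤ R) :
    ∃ N : Finset E, (#N : ℝ) ≤ (5 * R / t) ^ finrank ℝ E ∧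
      closedBall x R ⊆ ⋃ y ∈ N, closedBall y (t / 2) := by
  lift t to ℝ≥0 using ht.le
  have hε : 0 < t / 2 := half_pos (by exact_mod_cast ht)
  have hpack : packingNumber (t / 2) (closedBall x R) ≠ ⊤ :=
    have := FiniteDimensional.proper_real E
    packingNumber_ne_top_of_totallyBounded (isCompact_closedBall x R).totallyBounded hε.ne'
  have hfin : (maximalSeparatedSet (t / 2) (closedBall x R)).Finite := by
    rwa [← Set.encard_ne_top_iff, encard_maximalSeparatedSet hpack]
  refine ⟨hfin.toFinset, ?_, ?_⟩
  · calc
      (#hfin.toFinset : ℝ) ≤ (1 + 2 * R / (t / 2 : ℝ≥0)) ^ finrank ℝ E :=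
        card_le_of_isSeparated_of_subset_closedBall (ht.le.trans htR) hε
          (by rw [hfin.coe_toFinset]; exact isSeparated_maximalSeparatedSet)
          (by rw [hfin.coe_toFinset]; exact maximalSeparatedSet_subset)
      _ ≤ (5 * R / t) ^ finrank ℝ E := by
        have : 0 ≤ R := ht.le.trans htR
        gcongr
        rw [NNReal.coe_div, NNReal.coe_two]
        field_simp
        linarith
  · simpa using (isCover_maximalSeparatedSet hpack).subset_iUnion_closedBall

end Covering

section Density

open Bornology Metric Module
open scoped Finset Topology

variable {X : Type*}

/-- `DensityLE O ρ`: the family `O` has density at most `ρ`, in an arbitrary pseudometric space. On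
`EuclideanSpace ℝ (Fin d)` it unfolds to `FamilyDensityLE d O ρ`. The count is an `ncard`, which is
`0` on infinite sets, so the notion is meaningful for finite `O` only. -/
def DensityLE [PseudoMetricSpace X] (O : Set (Set X)) (ρ : ℝ) : Prop :=
  ∀ b : Set X, IsBounded b → ({o ∈ O | (o ∩ b).Nonempty ∧ diam b ≤ diam o}.ncard : ℝ) ≤ ρ

lemma ncard_sep_coe_finset {α : Type*} (s : Finset α) (P : α → Prop) [DecidablePred P] :
    {a ∈ (s : Set α) | P a}.ncard = #{a ∈ s | P a} := by
  rw [← Set.ncard_coe_finset, Finset.coe_filter]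
  simp only [Finset.mem_coe]

lemma DensityLE.nonneg [PseudoMetricSpace X] {O : Set (Set X)} {ρ : ℝ} (h : DensityLE O ρ) :
    0 ≤ ρ :=
  (Nat.cast_nonneg _).trans (h ∅ isBounded_empty)

open Classical in
lemma DensityLE.card_filter_le [PseudoMetricSpace X] {O : Finset (Set X)} {ρ : ℝ}
    (h : DensityLE (O : Set (Set X)) ρ) {b : Set X} (hb : IsBounded b) {t : ℝ} (ht : diam b ≤ t) :
    #{o ∈ O | (o ∩ b).Nonempty ∧ t ≤ diam o} ≤ ρ := by
  calc
    (#{o ∈ O | (o ∩ b).Nonempty ∧ t ≤ diam o} : ℝ)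
      ≤ #{o ∈ O | (o ∩ b).Nonempty ∧ diam b ≤ diam o} := by gcongr
    _ ≤ ρ := by
      rw [← ncard_sep_coe_finset]
      exact h b hb

open Classical in
lemma DensityLE.card_filter_le_of_subset_iUnion [PseudoMetricSpace X] {O : Finset (Set X)} {ρ : ℝ}
    (h : DensityLE (O : Set (Set X)) ρ) {κ : Type*} {c : Finset κ} {u : κ → Set X} {b : Set X}
    (hb : b ⊆ ⋃ k ∈ c, u k) {t : ℝ} (hu : ∀ k ∈ c, IsBounded (u k))
    (ht : ∀ k ∈ c, diam (u k) ≤ t) :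
    #{o ∈ O | (o ∩ b).Nonempty ∧ t ≤ diam o} ≤ #c * ρ := by
  have hcover (o : Set X) : (o ∩ b).Nonempty ∧ t ≤ diam o →
      ∃ k ∈ c, (o ∩ u k).Nonempty ∧ t ≤ diam o := by
    rintro ⟨⟨y, hyo, hyb⟩, hto⟩
    obtain ⟨k, hk, hyk⟩ := Set.mem_iUnion₂.1 (hb hyb)
    exact ⟨k, hk, ⟨y, hyo, hyk⟩, hto⟩
  simpa using sum_filter_le_card_mul (s := O) (w := fun _ => 1) (fun _ _ => zero_le_one)
    (fun o _ => hcover o) fun k hk => by simpa using h.card_filter_le (hu k hk) (ht k hk)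

lemma eventually_le_diam_of_notMem [MetricSpace X] {o : Set X} (ho : IsBounded o) {x : X}
    (hx : x ∉ o) : ∀ᶠ δ in 𝓝 (0 : ℝ), (o ∩ closedBall x δ).Nonempty → δ ≤ diam o := by
  rcases o.eq_empty_or_nonempty with rfl | ⟨q, hq⟩
  · simp
  have hqx : 0 < dist q x := dist_pos.2 (ne_of_mem_of_not_mem hq hx)
  filter_upwards [eventually_le_nhds (half_pos hqx)]
  rintro δ hδ ⟨y, hyo, hyx⟩
  linarith [mem_closedBall.1 hyx, dist_triangle q y x, dist_le_diam_of_mem ho hq hyo]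

variable {E : Type*} [NormedAddCommGroup E] [NormedSpace ℝ E] {O : Finset (Set E)} {ρ : ℝ}

open Classical in
lemma DensityLE.exists_sphere_mem_card_le [Nontrivial E] (h : DensityLE (O : Set (Set E)) ρ)
    (hO : ∀ o ∈ O, IsBounded o) (x : E) :
    ∃ (ctr : E) (R : ℝ), 0 < R ∧ x ∈ sphere ctr R ∧
      #{o ∈ O | (o ∩ sphere ctr R).Nonempty} ≤ 2 * ρ := by
  have hsmall : ∀ᶠ δ in 𝓝[>] (0 : ℝ), ∀ o ∈ O, x ∉ o → (o ∩ closedBall x δ).Nonempty → δ ≤ diam o :=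
    ((Filter.eventually_all_finset O).2 fun o ho => Filter.eventually_imp_distrib_left.2 fun hx =>
      eventually_le_diam_of_notMem (hO o ho) hx).filter_mono nhdsWithin_le_nhds
  obtain ⟨δ, hδO, hδ : 0 < δ⟩ := (hsmall.and self_mem_nhdsWithin).exists
  obtain ⟨v, hv⟩ := exists_norm_eq E (half_pos hδ).le
  have hdiam : diam (sphere (x + v) (δ / 2)) ≤ δ := by
    calc
      diam (sphere (x + v) (δ / 2)) ≤ diam (closedBall (x + v) (δ / 2)) :=
        diam_mono sphere_subset_closedBall isBounded_closedBall
      _ ≤ 2 * (δ / 2) := diam_closedBall (half_pos hδ).le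
      _ = δ := mul_div_cancel₀ δ two_ne_zero
  have hsub : sphere (x + v) (δ / 2) ⊆ closedBall x δ :=
    sphere_subset_closedBall.trans <| closedBall_subset_closedBall' <| by
      rw [dist_self_add_left, hv, add_halves]
  refine ⟨x + v, δ / 2, half_pos hδ, by rw [mem_sphere, dist_self_add_right, hv], ?_⟩
  calc
    (#{o ∈ O | (o ∩ sphere (x + v) (δ / 2)).Nonempty} : ℝ)
      ≤ #({o ∈ O | (o ∩ {x}).Nonempty ∧ 0 ≤ diam o} ∪
          {o ∈ O | (o ∩ sphere (x + v) (δ / 2)).Nonempty ∧ δ ≤ diam o}) := by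
        rw [← Finset.filter_or]
        gcongr with o ho
        intro hoS
        by_cases hxo : x ∈ o
        · exact Or.inl ⟨⟨x, hxo, rfl⟩, diam_nonneg⟩
        · exact Or.inr ⟨hoS, hδO o ho hxo (hoS.mono (Set.inter_subset_inter_right o hsub))⟩
    _ ≤ ρ + ρ := by
      refine (Nat.cast_le.2 (Finset.card_union_le _ _)).trans ?_
      rw [Nat.cast_add]
      exact add_le_add (h.card_filter_le isBounded_singleton diam_singleton.le)
        (h.card_filter_le isBounded_sphere hdiam)
    _ = 2 * ρ := (two_mul ρ).symm

lemma exists_sphere_subset_pair (hE : finrank ℝ E = 1) (x : E) (R : ℝ) :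
    ∃ a b : E, sphere x R ⊆ {a, b} := by
  obtain ⟨v, hv, hspan⟩ := finrank_eq_one_iff'.1 hE
  refine ⟨x + (R / ‖v‖) • v, x + (-(R / ‖v‖)) • v, fun y hy => ?_⟩
  obtain ⟨a, ha⟩ := hspan (y - x)
  have habs : |a| = R / ‖v‖ := by
    rw [eq_div_iff (norm_ne_zero_iff.2 hv), ← Real.norm_eq_abs, ← norm_smul, ha]
    exact mem_sphere_iff_norm.1 hy
  obtain rfl : y = x + a • v := by rw [ha, add_sub_cancel]
  rcases eq_or_eq_neg_of_abs_eq habs with rfl | rfl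
  exacts [Or.inl rfl, Or.inr rfl]

open Classical in
lemma DensityLE.card_filter_sphere_le_of_finrank_eq_one (h : DensityLE (O : Set (Set E)) ρ)
    (hE : finrank ℝ E = 1) (x : E) (R : ℝ) : #{o ∈ O | (o ∩ sphere x R).Nonempty} ≤ 2 * ρ := by
  obtain ⟨a, b, hab⟩ := exists_sphere_subset_pair hE x R
  calc
    (#{o ∈ O | (o ∩ sphere x R).Nonempty} : ℝ) ≤ #({a, b} : Finset E) * ρ := by
      simpa only [diam_nonneg, and_true] using
        h.card_filter_le_of_subset_iUnion (c := {a, b}) (u := fun y => {y}) (t := 0)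
          (by simpa only [Finset.set_biUnion_insert, Finset.set_biUnion_singleton,
            Set.singleton_union] using hab)
          (fun _ _ => isBounded_singleton) fun _ _ => diam_singleton.le
    _ ≤ 2 * ρ := by
      have := h.nonneg
      gcongr
      exact_mod_cast Finset.card_le_two

variable [FiniteDimensional ℝ E]

open Classical in
lemma DensityLE.card_filter_closedBall_mul_le (h : DensityLE (O : Set (Set E)) ρ) (x : E) {R t : ℝ}
    (ht : 0 < t) (htR : t ≤ R) :
    #{o ∈ O | (o ∩ closedBall x R).Nonempty ∧ t ≤ diam o} * t ^ finrank ℝ E ≤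
      ρ * (5 * R) ^ finrank ℝ E := by
  obtain ⟨N, hN, hsub⟩ := exists_finset_card_le_closedBall_subset x ht htR
  have hdiam (y : E) : diam (closedBall y (t / 2)) ≤ t := by
    linarith [diam_closedBall (x := y) (half_pos ht).le]
  have := h.nonneg
  calc
    #{o ∈ O | (o ∩ closedBall x R).Nonempty ∧ t ≤ diam o} * t ^ finrank ℝ E
      ≤ (5 * R / t) ^ finrank ℝ E * ρ * t ^ finrank ℝ E := by
        gcongr
        exact (h.card_filter_le_of_subset_iUnion hsub (fun _ _ => isBounded_closedBall)
          fun y _ => hdiam y).trans (by gcongr)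
    _ = ρ * (5 * R) ^ finrank ℝ E := by
      rw [div_pow]
      field_simp

open Classical in
lemma DensityLE.sum_diam_le (h : DensityLE (O : Set (Set E)) ρ) (hE : 2 ≤ finrank ℝ E) (x : E)
    {R : ℝ} (hR : 0 ≤ R) :
    ∑ o ∈ O with (o ∩ closedBall x R).Nonempty ∧ diam o < R, diam o ≤
      10 * R * (ρ ^ (1 / finrank ℝ E : ℝ) * (#O : ℝ) ^ (1 - 1 / finrank ℝ E : ℝ)) := by
  set d := finrank ℝ E
  have hd : (2 : ℝ) ≤ d := by exact_mod_cast hE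
  have hpq := Real.HolderConjugate.conjExponent (p := d) (by linarith)
  have hq : Real.conjExponent d ≤ 2 := by
    rw [Real.conjExponent, div_le_iff₀ (by linarith)]
    linarith
  have hρ := h.nonneg
  set S := {o ∈ O | (o ∩ closedBall x R).Nonempty ∧ diam o < R}
  have hlevel : ∀ t : ℝ, 0 < t → #{o ∈ S | t ≤ diam o} * t ^ (d : ℝ) ≤ ρ * (5 * R) ^ d := by
    intro t ht
    rw [Real.rpow_natCast]
    rcases le_or_gt t R with htR | htR
    · refine le_trans ?_ (h.card_filter_closedBall_mul_le x ht htR)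
      rw [Finset.filter_filter]
      gcongr with o
      exact And.left
    · have hempty : {o ∈ S | t ≤ diam o} = ∅ :=
        Finset.filter_false_of_mem fun o ho => by
          linarith [(Finset.mem_filter.1 ho).2.2]
      rw [hempty, Finset.card_empty, Nat.cast_zero, zero_mul]
      positivity
  calc
    ∑ o ∈ S, diam o
      ≤ Real.conjExponent d * ((ρ * (5 * R) ^ d) ^ (d⁻¹ : ℝ) *
          (#S : ℝ) ^ (Real.conjExponent d)⁻¹) :=
        sum_le_of_forall_card_mul_rpow_le hpq (fun _ _ => diam_nonneg) hlevel
    _ ≤ 2 * ((ρ * (5 * R) ^ d) ^ (d⁻¹ : ℝ) * (#O : ℝ) ^ (Real.conjExponent d)⁻¹) := by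
        have := hpq.symm.inv_nonneg
        gcongr
        exact Finset.filter_subset _ O
    _ = 10 * R * (ρ ^ (1 / d : ℝ) * (#O : ℝ) ^ (1 - 1 / d : ℝ)) := by
        rw [Real.mul_rpow hρ (by positivity), Real.pow_rpow_inv_natCast (by positivity) (by omega),
          ← hpq.one_sub_inv, one_div]
        ring

open Classical in
lemma DensityLE.exists_mem_Icc_card_filter_sphere_le (h : DensityLE (O : Set (Set E)) ρ)
    (hO : ∀ o ∈ O, IsBounded o) (hE : 1 ≤ finrank ℝ E) (x : E) {r : ℝ} (hr : 0 < r) :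
    ∃ R ∈ Set.Icc r (2 * r), #{o ∈ O | (o ∩ sphere x R).Nonempty} ≤ 20 ^ finrank ℝ E *
      (ρ + ρ ^ (1 / finrank ℝ E : ℝ) * (#O : ℝ) ^ (1 - 1 / finrank ℝ E : ℝ)) := by
  have hρ := h.nonneg
  have hpow : (20 : ℝ) ≤ 20 ^ finrank ℝ E := le_self_pow₀ (by norm_num) (by omega)
  set M := ρ ^ (1 / finrank ℝ E : ℝ) * (#O : ℝ) ^ (1 - 1 / finrank ℝ E : ℝ)
  have hM : 0 ≤ M := by positivity
  rcases hE.eq_or_lt' with hE1 | hE2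
  · refine ⟨r, ⟨le_rfl, by linarith⟩, ?_⟩
    calc
      (#{o ∈ O | (o ∩ sphere x r).Nonempty} : ℝ) ≤ 2 * ρ :=
        h.card_filter_sphere_le_of_finrank_eq_one hE1 x r
      _ ≤ 20 ^ finrank ℝ E * (ρ + M) := by
        gcongr <;> linarith
  obtain ⟨R, hR, hcount⟩ :=
    exists_mem_Icc_card_filter_sphere_le_add x (a := r) (b := 2 * r) (by linarith) (2 * r) hO
  have hsmall := h.sum_diam_le hE2 x (R := 2 * r) (by positivity)
  have hlarge : #{o ∈ O | (o ∩ closedBall x (2 * r)).Nonempty ∧ 2 * r ≤ diam o} ≤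
      5 ^ finrank ℝ E * ρ := by
    have := h.card_filter_closedBall_mul_le x (R := 2 * r) (by positivity) le_rfl
    rw [mul_pow 5, ← mul_assoc, mul_comm ρ] at this
    exact le_of_mul_le_mul_right this (by positivity)
  refine ⟨R, hR, hcount.trans ?_⟩
  calc
    (∑ o ∈ O with (o ∩ closedBall x (2 * r)).Nonempty ∧ diam o < 2 * r, diam o) / (2 * r - r) +
        #{o ∈ O | (o ∩ closedBall x (2 * r)).Nonempty ∧ 2 * r ≤ diam o}
      ≤ 10 * (2 * r) * M / (2 * r - r) + 5 ^ finrank ℝ E * ρ := by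
        gcongr
        linarith
    _ = 20 * M + 5 ^ finrank ℝ E * ρ := by
      rw [two_mul, add_sub_cancel_right]
      field_simp
      ring
    _ ≤ 20 ^ finrank ℝ E * M + 20 ^ finrank ℝ E * ρ := by
      gcongr
      norm_num
    _ = 20 ^ finrank ℝ E * (ρ + M) := by ring

end Density

section Separator

open Bornology Metric Module
open scoped Finset

lemma exists_heavy_closedBall_forall_light {X ι : Type*} [PseudoMetricSpace X] [Nonempty X]
    (p : ι → X) [∀ b i, Decidable (p i ∈ (b : Set X))] {s : Finset ι} {w : ι → ℝ}
    (hw : ∀ i ∈ s, 0 ≤ w i) {m : ℝ} (hm : m ≤ ∑ i ∈ s, w i) :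
    ∃ x r, 0 ≤ r ∧ m ≤ ∑ i ∈ s with p i ∈ closedBall x r, w i ∧
      ∀ b, IsBounded b → diam b < r → ∑ i ∈ s with p i ∈ b, w i < m := by
  have hne : ({t ∈ s.powerset | m ≤ ∑ i ∈ t, w i} : Finset (Finset ι)).Nonempty :=
    ⟨s, Finset.mem_filter.2 ⟨Finset.mem_powerset_self s, hm⟩⟩
  obtain ⟨t, ht, hmin⟩ := Finset.exists_min_image _ (fun t : Finset ι => diam (p '' t)) hne
  obtain ⟨hts, htm⟩ := Finset.mem_filter.1 ht
  rw [Finset.mem_powerset] at hts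
  have hbdd : IsBounded (p '' t) := (t.finite_toSet.image p).isBounded
  obtain ⟨x, hx⟩ : ∃ x, p '' t ⊆ closedBall x (diam (p '' t)) := by
    rcases (p '' t).eq_empty_or_nonempty with hempty | ⟨x, hx⟩
    · exact ⟨Classical.arbitrary X, hempty ▸ Set.empty_subset _⟩
    · exact ⟨x, fun y hy => dist_le_diam_of_mem hbdd hy hx⟩
  refine ⟨x, diam (p '' t), diam_nonneg, htm.trans ?_, fun b hb hbt => ?_⟩
  · refine Finset.sum_le_sum_of_subset_of_nonneg (fun i hi => ?_) fun i hi _ =>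
      hw i (Finset.mem_filter.1 hi).1
    exact Finset.mem_filter.2 ⟨hts hi, hx (Set.mem_image_of_mem p hi)⟩
  · by_contra! hheavy
    refine hbt.not_ge <| (hmin {i ∈ s | p i ∈ b} ?_).trans (diam_mono ?_ hb)
    · exact Finset.mem_filter.2 ⟨Finset.mem_powerset.2 (Finset.filter_subset _ _), hheavy⟩
    · rintro _ ⟨i, hi, rfl⟩
      exact (Finset.mem_filter.1 hi).2

variable {E : Type*} [NormedAddCommGroup E] [NormedSpace ℝ E] [FiniteDimensional ℝ E]

open Classical in
lemma exists_heavy_closedBall_light_double {ι : Type*} (p : ι → E) {s : Finset ι} {w : ι → ℝ}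
    (hw : ∀ i ∈ s, 0 ≤ w i) :
    ∃ x r, 0 ≤ r ∧
      (∑ i ∈ s, w i) / (2 * 20 ^ finrank ℝ E) ≤ ∑ i ∈ s with p i ∈ closedBall x r, w i ∧
      (0 < r → ∑ i ∈ s with p i ∈ closedBall x (2 * r), w i ≤ (∑ i ∈ s, w i) / 2) := by
  have hpow : (1 : ℝ) ≤ 20 ^ finrank ℝ E := one_le_pow₀ (by norm_num)
  have hW : 0 ≤ ∑ i ∈ s, w i := Finset.sum_nonneg hw
  obtain ⟨x, r, hr, hheavy, hlight⟩ := exists_heavy_closedBall_forall_light p hw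
    (m := (∑ i ∈ s, w i) / (2 * 20 ^ finrank ℝ E)) (div_le_self hW (by linarith))
  refine ⟨x, r, hr, hheavy, fun hr => ?_⟩
  obtain ⟨N, hN, hsub⟩ := exists_finset_card_le_closedBall_subset x (R := 2 * r) (half_pos hr)
    (by linarith)
  have hNlight (y : E) : ∑ i ∈ s with p i ∈ closedBall y (r / 2 / 2), w i ≤
      (∑ i ∈ s, w i) / (2 * 20 ^ finrank ℝ E) :=
    (hlight _ isBounded_closedBall (by
      linarith [diam_closedBall (x := y) (r := r / 2 / 2) (by positivity)])).le
  calc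
    ∑ i ∈ s with p i ∈ closedBall x (2 * r), w i
      ≤ #N * ((∑ i ∈ s, w i) / (2 * 20 ^ finrank ℝ E)) :=
        sum_filter_le_card_mul hw
          (fun i _ hi => by simpa only [Set.mem_iUnion₂, exists_prop] using hsub hi)
          fun y _ => hNlight y
    _ ≤ (5 * (2 * r) / (r / 2)) ^ finrank ℝ E * ((∑ i ∈ s, w i) / (2 * 20 ^ finrank ℝ E)) := by
      gcongr
    _ = (∑ i ∈ s, w i) / 2 := by
      rw [show 5 * (2 * r) / (r / 2) = 20 by field_simp; norm_num]
      field_simp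

open Classical in
lemma DensityLE.exists_sphere_around_closedBall {O : Finset (Set E)} {ρ : ℝ}
    (h : DensityLE (O : Set (Set E)) ρ) (hO : ∀ o ∈ O, IsBounded o) (hE : 1 ≤ finrank ℝ E) (x : E)
    {r : ℝ} (hr : 0 ≤ r) :
    ∃ ctr R, 0 < R ∧
      #{o ∈ O | (o ∩ sphere ctr R).Nonempty} ≤ 20 ^ finrank ℝ E *
        (ρ + ρ ^ (1 / finrank ℝ E : ℝ) * (#O : ℝ) ^ (1 - 1 / finrank ℝ E : ℝ)) ∧
      closedBall x r ⊆ closedBall ctr R ∧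
      (Disjoint (ball ctr R) (closedBall x r) ∨ 0 < r ∧ ball ctr R ⊆ closedBall x (2 * r)) := by
  rcases hr.eq_or_lt' with rfl | hr
  · have := nontrivial_of_finrank_pos hE
    obtain ⟨ctr, R, hR, hx, hcount⟩ := h.exists_sphere_mem_card_le hO x
    have hρ := h.nonneg
    have hpow : (2 : ℝ) ≤ 20 ^ finrank ℝ E :=
      le_trans (by norm_num) (le_self_pow₀ (by norm_num : (1 : ℝ) ≤ 20) (by omega))
    refine ⟨ctr, R, hR, hcount.trans ?_, ?_, Or.inl ?_⟩
    · gcongr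
      exact le_add_of_nonneg_right (by positivity)
    · simpa only [closedBall_zero, Set.singleton_subset_iff] using sphere_subset_closedBall hx
    · simpa only [closedBall_zero, Set.disjoint_singleton_right] using
        Set.disjoint_left.1 sphere_disjoint_ball hx
  · obtain ⟨R, ⟨hrR, hR2⟩, hcount⟩ := h.exists_mem_Icc_card_filter_sphere_le hO hE x hr
    exact ⟨x, R, hr.trans_le hrR, hcount, closedBall_subset_closedBall hrR,
      Or.inr ⟨hr, ball_subset_closedBall.trans (closedBall_subset_closedBall hR2)⟩⟩

open Classical in
theorem stmt6_general (d : ℕ) (hd : 1 ≤ d) :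
    ∃ C : ℝ, 0 < C ∧ ∃ c : ℝ, 0 < c ∧ c < 1 ∧
      ∀ (E : Type*) [NormedAddCommGroup E] [NormedSpace ℝ E], finrank ℝ E = d →
        ∀ (O : Finset (Set E)) (ρ : ℝ) (w : Set E → ℝ),
          (∀ o ∈ O, IsBounded o) → (∀ o ∈ O, o.Nonempty) → (∀ o ∈ O, 0 ≤ w o) →
          DensityLE (O : Set (Set E)) ρ →
          ∃ (ctr : E) (R : ℝ), 0 < R ∧
            #{o ∈ O | (o ∩ sphere ctr R).Nonempty} ≤
              C * (ρ + ρ ^ (1 / d : ℝ) * (#O : ℝ) ^ (1 - 1 / d : ℝ)) ∧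
            ∑ o ∈ O with o ⊆ ball ctr R, w o ≤ c * ∑ o ∈ O, w o ∧
            ∑ o ∈ O with Disjoint o (closedBall ctr R), w o ≤ c * ∑ o ∈ O, w o := by
  have hpow : (1 : ℝ) ≤ 20 ^ d := one_le_pow₀ (by norm_num)
  have hc : 1 / (2 * 20 ^ d : ℝ) ≤ 1 / 2 := by gcongr; linarith
  refine ⟨20 ^ d, by positivity, 1 - 1 / (2 * 20 ^ d), by linarith, by simp, ?_⟩
  rintro E _ _ rfl O ρ w hO hne hw h
  have := finite_of_finrank_pos hd
  choose! p hp using hne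
  obtain ⟨x, r, hr, hheavy, hlight⟩ := exists_heavy_closedBall_light_double p hw
  obtain ⟨ctr, R, hR, hcount, hsub, hball⟩ := h.exists_sphere_around_closedBall hO hd x hr
  have hrest (P : Set E → Prop) (hP : ∀ o ∈ O, P o → p o ∉ closedBall x r) :
      ∑ o ∈ O with P o, w o ≤ (1 - 1 / (2 * 20 ^ finrank ℝ E)) * ∑ o ∈ O, w o := by
    rw [one_sub_mul, one_div_mul_eq_div]
    linarith [sum_filter_add_sum_filter_le hw hP]
  refine ⟨ctr, R, hR, hcount, ?_, hrest _ fun o ho hdisj hpo =>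
    Set.disjoint_left.1 hdisj (hp o ho) (hsub hpo)⟩
  rcases hball with hdisj | ⟨hr, hR2⟩
  · exact hrest _ fun o ho hoR hpo => Set.disjoint_left.1 hdisj (hoR (hp o ho)) hpo
  calc
    ∑ o ∈ O with o ⊆ ball ctr R, w o
      ≤ ∑ o ∈ O with p o ∈ closedBall x (2 * r), w o := by
        gcongr with o ho
        · exact fun o ho _ => hw o (Finset.mem_filter.1 ho).1
        · exact fun hoR => hR2 (hoR (hp o ho))
    _ ≤ (∑ o ∈ O, w o) / 2 := hlight hr
    _ ≤ (1 - 1 / (2 * 20 ^ finrank ℝ E)) * ∑ o ∈ O, w o := by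
      linarith [mul_le_mul_of_nonneg_right hc (Finset.sum_nonneg hw)]

end Separator

/- STATEMENT 6: weighted separator theorem for low-density families.  There are constants
`C > 0` and `c ∈ (0,1)`, depending only on `d`, such that for every finite family of `n`
objects of density `ρ` with nonnegative weights summing to `W`, there is a sphere that
intersects at most `C(ρ + ρ^{1/d} n^{1-1/d})` objects, and the objects strictly inside
(resp. strictly outside) have total weight at most `c·W`. -/
open Classical in
theorem stmt6 (d : ℕ) (hd : 1 ≤ d) :
    ∃ C : ℝ, 0 < C ∧ ∃ c : ℝ, 0 < c ∧ c < 1 ∧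
      ∀ (O : Finset (Set (EuclideanSpace ℝ (Fin d)))) (ρ : ℝ) (n : ℕ)
        (w : Set (EuclideanSpace ℝ (Fin d)) → ℝ),
        O.card = n →
        (∀ o ∈ O, Bornology.IsBounded o) → (∀ o ∈ O, o.Nonempty) →
        (∀ o ∈ O, 0 ≤ w o) →
        FamilyDensityLE d (↑O) ρ →
        ∃ (ctr : EuclideanSpace ℝ (Fin d)) (R : ℝ), 0 < R ∧
          (({o ∈ (O : Set (Set (EuclideanSpace ℝ (Fin d)))) |
              (o ∩ Metric.sphere ctr R).Nonempty}.ncard : ℝ)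
            ≤ C * (ρ + ρ ^ (1 / (d : ℝ)) * (n : ℝ) ^ (1 - 1 / (d : ℝ)))) ∧
          ((∑ o ∈ O, if o ⊆ Metric.ball ctr R then w o else 0) ≤ c * ∑ o ∈ O, w o) ∧
          ((∑ o ∈ O, if Disjoint o (Metric.closedBall ctr R) then w o else 0)
            ≤ c * ∑ o ∈ O, w o) := by
  obtain ⟨C, hC, c, hc0, hc1, h⟩ := stmt6_general d hd
  refine ⟨C, hC, c, hc0, hc1, fun O ρ n w hn hO hne hw hρ => ?_⟩
  simpa only [ncard_sep_coe_finset, ← Finset.sum_filter, hn] using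
    h _ finrank_euclideanSpace_fin O ρ w hO hne hw hρ
end
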